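/- arXiv:1710.07261 — 2 statements merged into one kernel-verified Lean document; each statement's English description precedes it below -/
import Mathlib

section
/- Let 𝒜 = (S, Σ_k, δ, s₀, Ω, τ) be a k-automaton in which every state is accessible. Then the set of n ∈ ℕ such that the state δ*(s₀, (n)_k) reached after reading the base-k representation of n does not lie in any strongly connected component of 𝒜 has upper density 0. -/
open Filter

/-- The upper density of a set of natural numbers:
`limsup_{n → ∞} |A ∩ [0,n)| / n`. -/
noncomputable def upperDensity (A : Set ℕ) : ℝ :=
  limsup (fun n : ℕ => (Nat.card ↥(A ∩ Set.Iio n) : ℝ) / n) atTop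

/-- The base-`k` representation of `n` as a word over `Σ_k = Fin k`, read starting
from the leading digit, with no leading zeros (junk value `[]` if `k ≤ 1`;
the representation of `0` is the empty word). -/
def kRepr (k n : ℕ) : List (Fin k) :=
  if h : 1 < k then
    (Nat.digits k n).reverse.pmap (fun d hd => (⟨d, hd⟩ : Fin k))
      (fun d hd => Nat.digits_lt_base h (List.mem_reverse.mp hd))
  else []

/-- Run a deterministic automaton with transition function `δ` from the state `s`
on the word `w`, reading `w` from the left: the extended transition function `δ*`. -/
def run {S : Type*} {k : ℕ} (δ : S → Fin k → S) (s : S) (w : List (Fin k)) : S :=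
  w.foldl δ s

/-- A sequence `a : ℕ → Ω` is `k`-automatic if it is produced by a deterministic
finite automaton with output, reading the base-`k` representation of the input
starting from the leading digit. -/
def IsAutomatic {Ω : Type*} (k : ℕ) (a : ℕ → Ω) : Prop :=
  ∃ (S : Type) (_ : Fintype S) (δ : S → Fin k → S) (s₀ : S) (τ : S → Ω),
    ∀ n : ℕ, a n = τ (run δ s₀ (kRepr k n))

/-- Two integers are multiplicatively independent if no nontrivial powers of them
coincide (equivalently, they are not both powers of a common integer). -/
def MultIndep (k l : ℕ) : Prop :=
  ∀ i j : ℕ, k ^ i = l ^ j → i = 0 ∧ j = 0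

/-- The finite word `w` occurs in the sequence `a` at position `i`. -/
def OccursAt {Ω : Type*} (a : ℕ → Ω) (w : List Ω) (i : ℕ) : Prop :=
  ∀ (j : ℕ) (h : j < w.length), w.get ⟨j, h⟩ = a (i + j)

/-- The finite word `w` is a factor of the sequence `a`. -/
def IsFactor {Ω : Type*} (a : ℕ → Ω) (w : List Ω) : Prop :=
  ∃ i : ℕ, OccursAt a w i

/-- A sequence is uniformly recurrent if each of its factors occurs in it with
bounded gaps. -/
def UniformlyRecurrent {Ω : Type*} (a : ℕ → Ω) : Prop :=
  ∀ w : List Ω, IsFactor a w →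
    ∃ C : ℕ, ∀ N : ℕ, ∃ i : ℕ, N ≤ i ∧ i ≤ N + C ∧ OccursAt a w i

/-- A strongly connected component of an automaton: a nonempty set of states closed
under all transitions and such that each of its states can be reached from each
other one by some word. -/
def IsSCC {S : Type*} {k : ℕ} (δ : S → Fin k → S) (C : Set S) : Prop :=
  C.Nonempty ∧ (∀ s ∈ C, ∀ u : Fin k, δ s u ∈ C) ∧
    ∀ s ∈ C, ∀ s' ∈ C, ∃ w : List (Fin k), run δ s w = s'

/-!
From every state of a finite automaton one reaches a strongly connected component: among the
reachable states take one whose set of reachable states is minimal. Padding, the connecting words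
can all be given a common length `L`. Components are never left, so with `K = k ^ L` the bad set `B`
is stable under `n ↦ n / K`, while every block `[K n, K n + K)` with `n > 0` contains an integer
outside `B`. The counting function of `B` therefore grows by a factor of at most `K - 1`, up to an
additive constant, when its argument is multiplied by `K`, and so it is sublinear.
-/

section CountingFunctions

theorem exists_forall_le_div_pow_mul_add {f : ℕ → ℝ} (hmono : Monotone f) (hle : ∀ N : ℕ, f N ≤ N)
    {K : ℕ} (hK : 0 < K) {b d : ℝ} (hb : 0 ≤ b) (hmul : ∀ N, f (K * N) ≤ b * f N + d) (m : ℕ) :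
    ∃ c, ∀ N : ℕ, f N ≤ (b / K) ^ m * N + c := by
  induction m with
  | zero => exact ⟨0, fun N => by simpa using hle N⟩
  | succ m ih =>
    obtain ⟨c, hc⟩ := ih
    refine ⟨b * ((b / K) ^ m + c) + d, fun N => ?_⟩
    calc f N ≤ f (K * (N / K + 1)) := hmono (Nat.lt_mul_div_succ N hK).le
      _ ≤ b * f (N / K + 1) + d := hmul _
      _ ≤ b * ((b / K) ^ m * (N / K + 1) + c) + d := by
        gcongr
        calc f (N / K + 1) ≤ (b / K) ^ m * ((N / K + 1 : ℕ) : ℝ) + c := hc _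
          _ ≤ (b / K) ^ m * (N / K + 1) + c := by
            push_cast
            gcongr
            exact Nat.cast_div_le
      _ = (b / K) ^ (m + 1) * N + (b * ((b / K) ^ m + c) + d) := by ring

theorem tendsto_div_atTop_zero_of_le_pow_mul_add {f : ℕ → ℝ} (hf : ∀ N, 0 ≤ f N) {q : ℝ}
    (hq : q < 1) (h : ∀ m : ℕ, ∃ c, ∀ N : ℕ, f N ≤ q ^ m * N + c) :
    Tendsto (fun N : ℕ => f N / N) atTop (nhds 0) := by
  refine tendsto_order.2 ⟨fun ε hε => .of_forall fun N => ?_, fun ε hε => ?_⟩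
  · exact hε.trans_le (div_nonneg (hf N) N.cast_nonneg)
  · obtain ⟨m, hm⟩ := exists_pow_lt_of_lt_one hε hq
    obtain ⟨c, hc⟩ := h m
    have hlim : Tendsto (fun N : ℕ => q ^ m + c / N) atTop (nhds (q ^ m)) := by
      simpa using tendsto_const_nhds.add (tendsto_const_div_atTop_nhds_zero_nat c)
    filter_upwards [hlim.eventually_lt_const hm, eventually_gt_atTop 0] with N hN hpos
    have hpos' : (0 : ℝ) < N := Nat.cast_pos.2 hpos
    calc f N / N ≤ (q ^ m * N + c) / N := by gcongr; exact hc N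
      _ = q ^ m + c / N := by rw [add_div, mul_div_cancel_right₀ _ hpos'.ne']
      _ < ε := hN

theorem count_lt_of_not {p : ℕ → Prop} [DecidablePred p] {n r : ℕ} (hr : r < n) (hp : ¬ p r) :
    Nat.count p n < n :=
  lt_of_le_of_ne (Nat.count_le p) fun h => hp (Nat.count_iff_forall.1 h r hr)

theorem count_mul_le {p : ℕ → Prop} [DecidablePred p] {K : ℕ} (hdiv : ∀ n, p n → p (n / K))
    (hblock : ∀ n, 0 < n → ∃ r < K, ¬ p (K * n + r)) (N : ℕ) :
    Nat.count p (K * N) ≤ (K - 1) * Nat.count p N + K := by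
  induction N with
  | zero => simp
  | succ N ih =>
    rw [mul_add_one, Nat.count_add, Nat.count_succ]
    rcases Nat.eq_zero_or_pos N with rfl | hN
    · simpa using (Nat.count_le p).trans (Nat.le_add_left K _)
    split_ifs with hpN
    · obtain ⟨r, hr, hpr⟩ := hblock N hN
      have hlt : Nat.count (fun r => p (K * N + r)) K < K := count_lt_of_not hr hpr
      rw [mul_add_one]
      omega
    · have hzero : Nat.count (fun r => p (K * N + r)) K = 0 :=
        Nat.count_iff_forall_not.2 fun r hr hp => hpN <| by
          simpa [Nat.mul_add_div (Nat.zero_lt_of_lt hr), Nat.div_eq_of_lt hr] using hdiv _ hp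
      simpa [hzero] using ih

end CountingFunctions

section UpperDensity

open Classical in
theorem upperDensity_eq_of_tendsto_count {B : Set ℕ} {d : ℝ}
    (h : Tendsto (fun n : ℕ => (Nat.count (· ∈ B) n : ℝ) / n) atTop (nhds d)) :
    upperDensity B = d := by
  have hcard (n : ℕ) : Nat.card ↥(B ∩ Set.Iio n) = Nat.count (· ∈ B) n := by
    rw [Nat.count_eq_card_filter_range, Nat.card_coe_set_eq, ← Set.ncard_coe_finset]
    congr 1
    ext m
    simp [and_comm]
  simpa only [upperDensity, hcard] using h.limsup_eq

open Classical in
theorem upperDensity_eq_zero_of_blocks {B : Set ℕ} {K : ℕ} (hdiv : ∀ n ∈ B, n / K ∈ B)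
    (hblock : ∀ n, 0 < n → ∃ r < K, K * n + r ∉ B) : upperDensity B = 0 := by
  obtain ⟨r, hr, -⟩ := hblock 1 one_pos
  have hK : 0 < K := Nat.zero_lt_of_lt hr
  have hratio : ((K - 1 : ℕ) : ℝ) / K < 1 :=
    (div_lt_one (Nat.cast_pos.2 hK)).2 (Nat.cast_lt.2 (Nat.sub_one_lt_of_lt hK))
  let f : ℕ → ℝ := fun N => Nat.count (· ∈ B) N
  have hmono : Monotone f := Nat.mono_cast.comp (Nat.count_monotone _)
  have hle (N : ℕ) : f N ≤ N := Nat.cast_le.2 (Nat.count_le _)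
  have hmul (N : ℕ) : f (K * N) ≤ (K - 1 : ℕ) * f N + K := by
    simp only [f]
    exact_mod_cast count_mul_le hdiv hblock N
  exact upperDensity_eq_of_tendsto_count <|
    tendsto_div_atTop_zero_of_le_pow_mul_add (fun _ => Nat.cast_nonneg _) hratio
      (exists_forall_le_div_pow_mul_add hmono hle hK (Nat.cast_nonneg _) hmul)

end UpperDensity

section Representation

variable {k n : ℕ}

theorem kRepr_mul_add (hk : 1 < k) (hn : 0 < n) (d : Fin k) :
    kRepr k (k * n + d) = kRepr k n ++ [d] := by
  have hdigits : Nat.digits k (k * n + d) = (d : ℕ) :: Nat.digits k n := by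
    rw [add_comm]
    exact Nat.digits_add k hk d n d.isLt (.inr hn.ne')
  simp [kRepr, hk, hdigits]

theorem exists_kRepr_pow_mul_add_eq_append (hk : 1 < k) (hn : 0 < n) (w : List (Fin k)) :
    ∃ r < k ^ w.length, kRepr k (k ^ w.length * n + r) = kRepr k n ++ w := by
  induction w using List.reverseRecOn with
  | nil => exact ⟨0, by simp, by simp⟩
  | append_singleton w d ih =>
    obtain ⟨r, hr, hrepr⟩ := ih
    refine ⟨k * r + d, ?_, ?_⟩
    · calc k * r + d < k * (r + 1) := by rw [mul_add_one]; gcongr; exact d.isLt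
        _ ≤ k * k ^ w.length := by gcongr; exact hr
        _ = k ^ (w ++ [d]).length := by simp [pow_succ']
    · have hvalue : k ^ (w ++ [d]).length * n + (k * r + d) = k * (k ^ w.length * n + r) + d := by
        simp only [List.length_append, List.length_singleton, pow_succ]
        ring
      rw [hvalue, kRepr_mul_add hk (by positivity), hrepr, List.append_assoc]

theorem kRepr_div_prefix (hk : 1 < k) (n : ℕ) : kRepr k (n / k) <+: kRepr k n := by
  rcases Nat.eq_zero_or_pos (n / k) with hzero | hpos
  · simp [hzero, kRepr]
  · refine ⟨[⟨n % k, Nat.mod_lt n (by omega)⟩], ?_⟩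
    rw [← kRepr_mul_add hk hpos, Nat.div_add_mod]

theorem kRepr_div_pow_prefix (hk : 1 < k) (n L : ℕ) : kRepr k (n / k ^ L) <+: kRepr k n := by
  induction L with
  | zero => simp
  | succ L ih =>
    rw [pow_succ, ← Nat.div_div_eq_div_mul]
    exact (kRepr_div_prefix hk _).trans ih

end Representation

section Automaton

variable {S : Type*} {k : ℕ} {δ : S → Fin k → S} {G : Set S}

theorem run_append (δ : S → Fin k → S) (s : S) (v w : List (Fin k)) :
    run δ s (v ++ w) = run δ (run δ s v) w :=
  List.foldl_append

theorem run_mem_of_closed (hG : ∀ s ∈ G, ∀ u, δ s u ∈ G) (w : List (Fin k)) {s : S} (hs : s ∈ G) :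
    run δ s w ∈ G := by
  induction w generalizing s with
  | nil => exact hs
  | cons u _ ih => exact ih (hG s hs u)

theorem run_mem_of_prefix (hG : ∀ s ∈ G, ∀ u, δ s u ∈ G) {s : S} {v w : List (Fin k)}
    (hvw : v <+: w) (hv : run δ s v ∈ G) : run δ s w ∈ G := by
  obtain ⟨t, rfl⟩ := hvw
  rw [run_append]
  exact run_mem_of_closed hG t hv

theorem exists_length_forall_run_mem [Finite S] (hk : 0 < k) (hG : ∀ s ∈ G, ∀ u, δ s u ∈ G)
    (hreach : ∀ s, ∃ w, run δ s w ∈ G) :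
    ∃ L, ∀ s, ∃ w : List (Fin k), w.length = L ∧ run δ s w ∈ G := by
  choose w hw using hreach
  obtain ⟨L, hL⟩ := Finite.bddAbove_range fun s => (w s).length
  refine ⟨L, fun s => ⟨w s ++ List.replicate (L - (w s).length) ⟨0, hk⟩, ?_, ?_⟩⟩
  · have hle : (w s).length ≤ L := hL ⟨s, rfl⟩
    simp [hle]
  · exact run_mem_of_prefix hG (List.prefix_append _ _) (hw s)

theorem upperDensity_run_kRepr_notMem_eq_zero (hk : 1 < k) (hG : ∀ s ∈ G, ∀ u, δ s u ∈ G)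
    {L : ℕ} (hL : ∀ s, ∃ w : List (Fin k), w.length = L ∧ run δ s w ∈ G) (s₀ : S) :
    upperDensity {n | run δ s₀ (kRepr k n) ∉ G} = 0 := by
  refine upperDensity_eq_zero_of_blocks (K := k ^ L) ?_ ?_
  · exact fun n hn hdiv => hn (run_mem_of_prefix hG (kRepr_div_pow_prefix hk n L) hdiv)
  · intro n hn
    obtain ⟨w, rfl, hw⟩ := hL (run δ s₀ (kRepr k n))
    obtain ⟨r, hr, hrepr⟩ := exists_kRepr_pow_mul_add_eq_append hk hn w
    refine ⟨r, hr, not_not_intro ?_⟩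
    rwa [hrepr, run_append]

end Automaton

section StronglyConnectedComponents

variable {S : Type*} {k : ℕ}

/-- The set of states that the automaton can reach from `s`, including `s` itself. -/
def reachable (δ : S → Fin k → S) (s : S) : Set S :=
  Set.range (run δ s)

theorem mem_reachable_self (δ : S → Fin k → S) (s : S) : s ∈ reachable δ s :=
  ⟨[], rfl⟩

theorem reachable_subset_of_mem {δ : S → Fin k → S} {s t : S} (ht : t ∈ reachable δ s) :
    reachable δ t ⊆ reachable δ s := by
  obtain ⟨v, rfl⟩ := ht
  rintro _ ⟨w, rfl⟩
  exact ⟨v ++ w, run_append δ s v w⟩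

theorem isSCC_reachable {δ : S → Fin k → S} {s : S}
    (hs : ∀ t ∈ reachable δ s, s ∈ reachable δ t) : IsSCC δ (reachable δ s) := by
  refine ⟨⟨s, mem_reachable_self δ s⟩, fun t ht u => ?_, fun t ht t' ht' => ?_⟩
  · exact reachable_subset_of_mem ht ⟨[u], rfl⟩
  · exact reachable_subset_of_mem (hs t ht) ht'

theorem exists_run_mem_isSCC [Finite S] (δ : S → Fin k → S) (s : S) :
    ∃ w, ∃ C, IsSCC δ C ∧ run δ s w ∈ C := by
  obtain ⟨t, ⟨w, rfl⟩, hmin⟩ :=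
    exists_minimalFor_of_wellFoundedLT (· ∈ reachable δ s) (reachable δ) ⟨s, mem_reachable_self δ s⟩
  refine ⟨w, _, isSCC_reachable fun u hu => ?_, mem_reachable_self δ _⟩
  exact hmin (reachable_subset_of_mem ⟨w, rfl⟩ hu) (reachable_subset_of_mem hu)
    (mem_reachable_self δ _)

end StronglyConnectedComponents

theorem density_strongly_connected_component_general {S : Type*} [Finite S] {k : ℕ} (hk : 2 ≤ k)
    (δ : S → Fin k → S) (s₀ : S) :
    upperDensity {n : ℕ | ¬ ∃ C : Set S, IsSCC δ C ∧ run δ s₀ (kRepr k n) ∈ C} = 0 := by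
  have hclosed : ∀ s ∈ ⋃₀ {C | IsSCC δ C}, ∀ u, δ s u ∈ ⋃₀ {C | IsSCC δ C} :=
    fun s ⟨C, hC, hs⟩ u => ⟨C, hC, hC.2.1 s hs u⟩
  obtain ⟨L, hL⟩ := exists_length_forall_run_mem (by omega) hclosed (exists_run_mem_isSCC δ)
  exact upperDensity_run_kRepr_notMem_eq_zero hk hclosed hL s₀

/-- For an automaton in which every state is accessible, the set of `n` whose
base-`k` representation leads from the initial state to a state lying in no
strongly connected component has upper density `0`. -/
theorem density_strongly_connected_component {S Ω : Type} [Fintype S]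
    (k : ℕ) (hk : 2 ≤ k)
    (δ : S → Fin k → S) (s₀ : S) (τ : S → Ω)
    (hacc : ∀ s : S, ∃ w : List (Fin k), run δ s₀ w = s) :
    upperDensity {n : ℕ | ¬ ∃ C : Set S, IsSCC δ C ∧ run δ s₀ (kRepr k n) ∈ C} = 0 :=
  density_strongly_connected_component_general hk δ s₀
end

section
/- Let t₁₂(n!) denote the least nonzero digit of n! in base 12. For y ∈ {4, 8}, the characteristic sequence n ↦ [t₁₂(n!) = y] is not k-automatic for any integer k ≥ 2. (One may assume as input the following facts, proved elsewhere: (i) there is a 3-automatic sequence b with values in {4,8} coinciding with t₁₂(n!) almost everywhere, where b(n) = 4 if the digits 2,3,4,6,7 appear among the base-9 digits of n in total an even number of times and b(n) = 8 otherwise; (ii) [t₁₂(n!) = y] is not 3-automatic for y ∈ {4,8}.) -/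
open Filter

/-- The least nonzero digit of `m` in base `k` (the nonzero digit of lowest order);
junk value `0` if there is none. -/
def leastNonzeroDigit (k m : ℕ) : ℕ :=
  ((Nat.digits k m).filter (fun d => d != 0)).headD 0

/-- The total number of occurrences of the digits `2, 3, 4, 6, 7` among the
base-`9` digits of `n`. -/
def specialDigitCount (n : ℕ) : ℕ :=
  ((Nat.digits 9 n).filter (fun d => decide (d ∈ ([2, 3, 4, 6, 7] : List ℕ)))).length

/-!
Let `f n ∈ ℤ/2` be the parity of the number of special base-`9` digits of `n`. It is strongly
`9`-additive, `f (9 n + r) = f n + f r` for `r < 9`, but not linear. If `k` is a power of `3`, a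
`k`-automatic sequence is `3`-automatic. Otherwise `k` and `9` are multiplicatively independent,
and we show that no `k`-automatic sequence coincides with `f` almost everywhere.

By finiteness two numbers `n < n + d` lead the automaton to the same state, so its output is
invariant under the shift by `h = k ^ m * d` on the interval `[k ^ m * n, k ^ m * (n + 1))`. As
`log k / log 9` is irrational, `m` and `t` can be chosen such that `h / 9 ^ t` is well away from the
integers, while `9 ^ t` is small compared to `k ^ m` yet large compared to the exceptional set.
Compare `f x` with `f (x + h)` for `x = 9 ^ t * u + v`, where the residue class of `v` avoids the
exceptional set. For small `v` this gives `f (u + 1) - f u = f (u + e + 1) - f (u + e)` with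
`e = ⌊h / 9 ^ t⌋`; for `v` near `9 ^ t` a carry replaces `e` by `e + 1`. Hence the second difference
of `f` vanishes at `u + e` for all `u` in a long interval, whereas by additivity its nonzero values
recur with bounded gaps.
-/

open Topology
open scoped fwdDiff

section Digits

/-- A colouring `φ` of `ℕ` *respects digits* in base `k` if the colour of a number is determined by
its last digit and the colour of the number formed by the preceding digits. With finitely many
colours this is an automaton, with colours as states, for which leading zeros are harmless. -/
def RespectsDigits {X : Type*} (k : ℕ) (φ : ℕ → X) : Prop :=
  ∀ ⦃n n' i : ℕ⦄, i < k → φ n = φ n' → φ (k * n + i) = φ (k * n' + i)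

/-- Strongly `l`-additive functions: appending a digit `r` in base `l` adds `f r` to the value. -/
def IsDigitAdditive {M : Type*} [Add M] (l : ℕ) (f : ℕ → M) : Prop :=
  ∀ ⦃n r : ℕ⦄, r < l → f (l * n + r) = f n + f r

theorem mul_mul_add_eq_mul_add_mod (k l n r : ℕ) :
    k * l * n + r = l * (k * n + r / l) + r % l := by
  conv_lhs => rw [← Nat.div_add_mod r l]
  ring

theorem div_lt_and_mod_lt_of_lt_mul {k l r : ℕ} (hr : r < k * l) : r / l < k ∧ r % l < l :=
  ⟨Nat.div_lt_of_lt_mul (by rwa [mul_comm]), Nat.mod_lt r (Nat.pos_of_lt_mul_left hr)⟩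

namespace RespectsDigits

variable {X : Type*} {k l : ℕ} {φ : ℕ → X}

theorem mul (hk : RespectsDigits k φ) (hl : RespectsDigits l φ) : RespectsDigits (k * l) φ := by
  intro n n' r hr hn
  obtain ⟨hdiv, hmod⟩ := div_lt_and_mod_lt_of_lt_mul hr
  rw [mul_mul_add_eq_mul_add_mod, mul_mul_add_eq_mul_add_mod k l n']
  exact hl hmod (hk hdiv hn)

theorem pow (hφ : RespectsDigits k φ) (m : ℕ) : RespectsDigits (k ^ m) φ := by
  induction m with
  | zero =>
    intro n n' r hr hn
    obtain rfl : r = 0 := by simpa using hr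
    simpa using hn
  | succ m ih => exact pow_succ k m ▸ ih.mul hφ

theorem exists_eq_shift [Finite X] (hφ : RespectsDigits k φ) :
    ∃ n d : ℕ, 0 < d ∧ ∀ m x : ℕ, k ^ m * n ≤ x → x < k ^ m * (n + 1) →
      φ x = φ (x + k ^ m * d) := by
  obtain ⟨n, n', hlt, hn⟩ : ∃ n n', n < n' ∧ φ n = φ n' := by
    obtain ⟨n, n', hne, hn⟩ := Finite.exists_ne_map_eq_of_infinite φ
    rcases hne.lt_or_gt with h | h
    exacts [⟨n, n', h, hn⟩, ⟨n', n, h, hn.symm⟩]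
  obtain ⟨d, hd, rfl⟩ : ∃ d, 0 < d ∧ n' = n + d := ⟨n' - n, by omega, by omega⟩
  refine ⟨n, d, hd, fun m x hx hx' => ?_⟩
  obtain ⟨r, rfl⟩ := Nat.exists_eq_add_of_le hx
  rw [show k ^ m * n + r + k ^ m * d = k ^ m * (n + d) + r by ring]
  exact hφ.pow m (by linarith) hn

end RespectsDigits

namespace IsDigitAdditive

theorem comp_addMonoidHom {M N : Type*} [AddZeroClass M] [AddZeroClass N] {l : ℕ} {f : ℕ → M}
    (hf : IsDigitAdditive l f) (g : M →+ N) : IsDigitAdditive l (g ∘ f) := fun n r hr => by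
  simp only [Function.comp_apply, hf hr, map_add]

theorem mul {M : Type*} [AddSemigroup M] {k l : ℕ} {f : ℕ → M} (hk : IsDigitAdditive k f)
    (hl : IsDigitAdditive l f) : IsDigitAdditive (k * l) f := by
  intro n r hr
  obtain ⟨hdiv, hmod⟩ := div_lt_and_mod_lt_of_lt_mul hr
  rw [mul_mul_add_eq_mul_add_mod, hl hmod, hk hdiv, add_assoc, ← hl hmod, Nat.div_add_mod]

theorem pow {M : Type*} [AddLeftCancelMonoid M] {l : ℕ} {f : ℕ → M} (hl : 0 < l)
    (hf : IsDigitAdditive l f) (t : ℕ) : IsDigitAdditive (l ^ t) f := by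
  induction t with
  | zero =>
    have hf0 : f 0 = 0 := by simpa using hf (n := 0) hl
    intro n r hr
    obtain rfl : r = 0 := by simpa using hr
    simp [hf0]
  | succ t ih => exact pow_succ l t ▸ ih.mul hf

end IsDigitAdditive

theorem isDigitAdditive_length_filter_digits {b : ℕ} (hb : 1 < b) {p : ℕ → Bool}
    (hp : p 0 = false) : IsDigitAdditive b fun n => ((Nat.digits b n).filter p).length := by
  intro n r hr
  dsimp only
  rcases eq_or_ne r 0 with rfl | hr0
  · rcases eq_or_ne n 0 with rfl | hn0
    · simp
    · rw [add_comm, Nat.digits_add b hb 0 n hr (Or.inr hn0)]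
      simp [hp]
  · rw [add_comm, Nat.digits_add b hb r n hr (Or.inl hr0), Nat.digits_of_lt b r hr0 hr,
      List.filter_cons, List.filter_singleton]
    cases p r <;> simp

end Digits

section Automatic

theorem kRepr_zero (k : ℕ) : kRepr k 0 = [] := by
  unfold kRepr
  split_ifs <;> simp

theorem run_kRepr_mul_add {S : Type*} {k : ℕ} (hk : 1 < k) (δ : S → Fin k → S) (s : S) {n i : ℕ}
    (hi : i < k) (h : i ≠ 0 ∨ n ≠ 0) :
    run δ s (kRepr k (k * n + i)) = δ (run δ s (kRepr k n)) ⟨i, hi⟩ := by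
  have hdigits : Nat.digits k (k * n + i) = i :: Nat.digits k n := by
    rw [add_comm]
    exact Nat.digits_add k hk i n hi h
  simp [run, kRepr, hk, hdigits, List.pmap_append]

namespace IsAutomatic

variable {Ω : Type*} {k : ℕ} {a : ℕ → Ω}

theorem comp {Ω' : Type*} (ha : IsAutomatic k a) (g : Ω → Ω') : IsAutomatic k (g ∘ a) := by
  obtain ⟨S, hS, δ, s₀, τ, h⟩ := ha
  exact ⟨S, hS, δ, s₀, g ∘ τ, fun n => congrArg g (h n)⟩

theorem exists_respectsDigits (hk : 1 < k) (ha : IsAutomatic k a) :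
    ∃ (X : Type) (_ : Finite X) (φ : ℕ → X) (τ : X → Ω), RespectsDigits k φ ∧ a = τ ∘ φ := by
  obtain ⟨S, _, δ, s₀, τ, h⟩ := ha
  -- The automaton never reads leading zeros, so `0` needs a colour apart from the states.
  refine ⟨Option S, inferInstance,
    fun n => if n = 0 then none else some (run δ s₀ (kRepr k n)), fun x => τ (x.getD s₀), ?_, ?_⟩
  · intro n n' i hi hn
    rcases eq_or_ne n 0 with rfl | hn0 <;> rcases eq_or_ne n' 0 with rfl | hn0'
    · rfl
    · simp [hn0'] at hn
    · simp [hn0] at hn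
    · have hk0 : k ≠ 0 := by omega
      simp only [hn0, hn0', if_false, Option.some.injEq] at hn
      simp [hk0, hn0, hn0', run_kRepr_mul_add hk δ s₀ hi, hn]
  · funext n
    rcases eq_or_ne n 0 with rfl | hn0
    · simp [h, kRepr_zero, run]
    · simp [h, hn0]

end IsAutomatic

theorem RespectsDigits.isAutomatic {Ω : Type*} {X : Type} [Finite X] {k : ℕ} (hk : 1 < k)
    {φ : ℕ → X} (hφ : RespectsDigits k φ) (τ : X → Ω) : IsAutomatic k (τ ∘ φ) := by
  let δ : X → Fin k → X := fun x i => φ (k * Function.invFun φ x + i)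
  have hδ (n : ℕ) (i : Fin k) : δ (φ n) i = φ (k * n + i) :=
    hφ i.2 (Function.invFun_eq ⟨n, rfl⟩)
  have hrun (n : ℕ) : run δ (φ 0) (kRepr k n) = φ n := by
    induction n using Nat.strong_induction_on with
    | _ n ih =>
      rcases eq_or_ne n 0 with rfl | hn0
      · rw [kRepr_zero]
        rfl
      · have hdivmod : k * (n / k) + n % k = n := Nat.div_add_mod n k
        have hne : n % k ≠ 0 ∨ n / k ≠ 0 := by
          by_contra! h
          simp [h.1, h.2, hn0.symm] at hdivmod
        rw [← hdivmod, run_kRepr_mul_add hk δ _ (Nat.mod_lt n (by omega)) hne,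
          ih _ (Nat.div_lt_self (Nat.pos_of_ne_zero hn0) hk), hδ]
  exact ⟨X, Fintype.ofFinite X, δ, φ 0, τ, fun n => by rw [hrun, Function.comp_apply]⟩

theorem IsAutomatic.of_pow {Ω : Type*} {k s : ℕ} {a : ℕ → Ω} (hk : 1 < k) (hs : s ≠ 0)
    (ha : IsAutomatic (k ^ s) a) : IsAutomatic k a := by
  obtain ⟨X, _, φ, τ, hφ, rfl⟩ := ha.exists_respectsDigits (Nat.one_lt_pow hs hk)
  -- Record the colours of all extensions of `n` by fewer than `s` digits; an extension by `s`
  -- digits is controlled by `hφ`.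
  let ψ : ℕ → (j : Fin s) → Fin (k ^ (j : ℕ)) → X := fun n j r => φ (k ^ (j : ℕ) * n + r)
  have hψ : RespectsDigits k ψ := by
    intro n n' i hi hn
    have hn' {j r : ℕ} (hj : j < s) (hr : r < k ^ j) : φ (k ^ j * n + r) = φ (k ^ j * n' + r) :=
      congrFun (congrFun hn ⟨j, hj⟩) ⟨r, hr⟩
    funext ⟨j, hj⟩ ⟨r, hr⟩
    have hsplit (x : ℕ) : k ^ j * (k * x + i) + r = k ^ (j + 1) * x + (k ^ j * i + r) := by ring
    have hlt : k ^ j * i + r < k ^ (j + 1) := by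
      calc k ^ j * i + r < k ^ j * (i + 1) := by linarith
        _ ≤ k ^ j * k := Nat.mul_le_mul_left _ hi
        _ = k ^ (j + 1) := (pow_succ k j).symm
    simp only [ψ, hsplit]
    rcases (Nat.succ_le_of_lt hj).lt_or_eq with hjs | rfl
    · exact hn' hjs hlt
    · exact hφ hlt (by simpa using hn' (r := 0) (Nat.pos_of_ne_zero hs) (by simp))
  convert hψ.isAutomatic hk fun x => τ (x ⟨0, Nat.pos_of_ne_zero hs⟩ ⟨0, by simp⟩) using 1
  funext n
  simp [ψ]

end Automatic

section Density

theorem eventually_card_lt_of_upperDensity_lt {A : Set ℕ} {ε : ℝ} (hA : upperDensity A < ε) :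
    ∀ᶠ n : ℕ in atTop, (Nat.card ↥(A ∩ Set.Iio n) : ℝ) < ε * n := by
  have hbdd : IsBoundedUnder (· ≤ ·) atTop
      (fun n : ℕ => (Nat.card ↥(A ∩ Set.Iio n) : ℝ) / n) := by
    refine isBoundedUnder_of ⟨1, fun n => div_le_one_of_le₀ ?_ n.cast_nonneg⟩
    have hcard : Nat.card ↥(A ∩ Set.Iio n) ≤ n := by
      simpa using Nat.card_mono (Set.finite_Iio n) (Set.inter_subset_right (s := A))
    exact_mod_cast hcard
  filter_upwards [eventually_lt_of_limsup_lt hA hbdd, eventually_gt_atTop 0] with n hn hpos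
  rwa [div_lt_iff₀ (by exact_mod_cast hpos)] at hn

theorem eventually_exists_finset_shift_notMem {A : Set ℕ} (hA : upperDensity A = 0) (C : ℕ) :
    ∀ᶠ N in atTop, ∀ h : ℕ, ∃ B : Finset ℕ, C * B.card < N ∧
      ∀ x ∉ B, x + h < N → x ∉ A ∧ x + h ∉ A := by
  classical
  have hε : upperDensity A < 1 / (2 * (C + 1)) := hA ▸ by positivity
  filter_upwards [eventually_card_lt_of_upperDensity_lt hε] with N hN h
  let G : Finset ℕ := (Finset.range N).filter (· ∈ A)
  have hG : Nat.card ↥(A ∩ Set.Iio N) = G.card := by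
    rw [Nat.card_coe_set_eq, ← Set.ncard_coe_finset]
    congr 1
    ext x
    simp [G, and_comm]
  have hGN : 2 * (C + 1) * G.card < N := by
    rw [hG, one_div_mul_eq_div, lt_div_iff₀' (by positivity)] at hN
    exact_mod_cast hN
  refine ⟨G ∪ G.image (· - h), ?_, fun x hx hxN => ?_⟩
  · have hcard : (G ∪ G.image (· - h)).card ≤ 2 * G.card := by
      linarith [Finset.card_union_le G (G.image (· - h)),
        Finset.card_image_le (s := G) (f := (· - h))]
    nlinarith
  · rw [Finset.mem_union, not_or] at hx
    refine ⟨fun hxA => hx.1 ?_, fun hxA => hx.2 (Finset.mem_image.2 ⟨x + h, ?_, by simp⟩)⟩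
    · exact Finset.mem_filter.2 ⟨Finset.mem_range.2 (by omega), hxA⟩
    · exact Finset.mem_filter.2 ⟨Finset.mem_range.2 hxN, hxA⟩

end Density

section MultiplicativeIndependence

theorem exists_nat_mul_sub_nat_mul_mem_Ioo {α β : ℝ} (hα : 0 < α) (hβ : 0 < β)
    (hirr : Irrational (α / β)) {c d : ℝ} (hcd : c < d) (M : ℕ) :
    ∃ m t : ℕ, M ≤ m ∧ m * α - t * β ∈ Set.Ioo c d := by
  have : Fact (0 < β) := ⟨hβ⟩
  obtain ⟨e, he⟩ := exists_between hcd
  have hcluster : MapClusterPt (e : AddCircle β) atTop (fun m : ℕ => m • (α : AddCircle β)) :=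
    ((mapClusterPt_atTop_nsmul_tfae (e : AddCircle β) _).out 0 3).2
      (AddCircle.denseRange_zsmul_coe_iff.2 hirr _)
  have hnhds : ((↑) : ℝ → AddCircle β) '' Set.Ioo c d ∈ 𝓝 (e : AddCircle β) :=
    (QuotientAddGroup.isOpenMap_coe _ isOpen_Ioo).mem_nhds ⟨e, he, rfl⟩
  obtain ⟨M', hM'⟩ := exists_nat_gt (d / α)
  obtain ⟨m, hm, x, hx, hxm⟩ :=
    frequently_atTop.1 (mapClusterPt_iff_frequently.1 hcluster _ hnhds) (max M M')
  obtain ⟨z, hz⟩ : ∃ z : ℤ, z • β = m * α - x := by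
    rw [← AddCircle.coe_eq_zero_iff, AddCircle.coe_sub, hxm, ← nsmul_eq_mul, AddCircle.coe_nsmul,
      sub_self]
  rw [zsmul_eq_mul] at hz
  have hz0 : 0 ≤ z := by
    have hdm : d < m * α := (div_lt_iff₀ hα).1
      (hM'.trans_le (by exact_mod_cast (le_max_right M M').trans hm))
    have hpos : (0 : ℝ) < z * β := by linarith [hx.2]
    exact_mod_cast (pos_of_mul_pos_left hpos hβ.le).le
  lift z to ℕ using hz0 with t
  rw [Int.cast_natCast] at hz
  exact ⟨m, t, (le_max_left M M').trans hm, by rwa [hz, sub_sub_cancel]⟩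

theorem multIndep_prime_pow {k p s : ℕ} (hp : p.Prime) (hs : s ≠ 0) (hk : ∀ r, k ≠ p ^ r) :
    MultIndep k (p ^ s) := by
  intro i j hij
  obtain rfl : i = 0 := by
    by_contra hi
    have hdvd : k ∣ p ^ (s * j) := by
      rw [pow_mul, ← hij]
      exact dvd_pow_self k hi
    obtain ⟨r, -, hr⟩ := (Nat.dvd_prime_pow hp).1 hdvd
    exact hk r hr
  rw [pow_zero, ← pow_mul, eq_comm, Nat.pow_eq_one] at hij
  simpa [hp.ne_one, hs] using hij

namespace MultIndep

variable {k l : ℕ}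

theorem irrational_log_div_log (hk : 1 < k) (hl : 1 < l) (h : MultIndep k l) :
    Irrational (Real.log k / Real.log l) := by
  have hlogk : 0 < Real.log k := Real.log_pos (by exact_mod_cast hk)
  have hlogl : 0 < Real.log l := Real.log_pos (by exact_mod_cast hl)
  rintro ⟨r, hr⟩
  have hr0 : 0 ≤ r := by
    have : (0 : ℝ) ≤ r := hr ▸ (div_pos hlogk hlogl).le
    exact_mod_cast this
  lift r to ℚ≥0 using hr0
  have hden : (r.den : ℝ) ≠ 0 := by exact_mod_cast r.den_ne_zero
  have hpow : (k : ℝ) ^ r.den = (l : ℝ) ^ r.num := by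
    apply Real.log_injOn_pos (Set.mem_Ioi.2 (by positivity)) (Set.mem_Ioi.2 (by positivity))
    rw [Rat.cast_nnratCast, NNRat.cast_def, div_eq_div_iff hden hlogl.ne'] at hr
    rw [Real.log_pow, Real.log_pow]
    linarith
  exact r.den_ne_zero (h r.den r.num (by exact_mod_cast hpow)).1

theorem exists_pow_div_pow_mem_Ioo (hk : 1 < k) (hl : 1 < l) (h : MultIndep k l) {p q : ℝ}
    (hp : 0 < p) (hpq : p < q) (M : ℕ) :
    ∃ m t : ℕ, M ≤ m ∧ (k : ℝ) ^ m / (l : ℝ) ^ t ∈ Set.Ioo p q := by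
  have : (0 : ℝ) < k := by positivity
  have : (0 : ℝ) < l := by positivity
  obtain ⟨m, t, hm, hlow, hhigh⟩ := exists_nat_mul_sub_nat_mul_mem_Ioo
    (Real.log_pos (by exact_mod_cast hk)) (Real.log_pos (by exact_mod_cast hl))
    (h.irrational_log_div_log hk hl) (Real.log_lt_log hp hpq) M
  have hlog : m * Real.log k - t * Real.log l = Real.log ((k : ℝ) ^ m / (l : ℝ) ^ t) := by
    rw [Real.log_div (by positivity) (by positivity), Real.log_pow, Real.log_pow]
  rw [hlog] at hlow hhigh
  exact ⟨m, t, hm, (Real.log_lt_log_iff hp (by positivity)).1 hlow,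
    (Real.log_lt_log_iff (by positivity) (hp.trans hpq)).1 hhigh⟩

theorem exists_pow_div_eq_and_mod_mem (hk : 1 < k) (hl : 1 < l) (h : MultIndep k l) {d : ℕ}
    (hd : 0 < d) (C M : ℕ) :
    ∃ m t : ℕ, M ≤ m ∧ k ^ m / l ^ t = C ∧
      l ^ t < 4 * (k ^ m * d % l ^ t) ∧ 4 * (k ^ m * d % l ^ t) < 3 * l ^ t := by
  have : (0 : ℝ) < d := by exact_mod_cast hd
  obtain ⟨m, t, hm, hlow, hhigh⟩ := h.exists_pow_div_pow_mem_Ioo hk hl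
    (p := (4 * C * d + 1) / (4 * d)) (q := (4 * C * d + 3) / (4 * d)) (by positivity)
    (by gcongr; norm_num) M
  rw [div_lt_div_iff₀ (by positivity) (by positivity)] at hlow hhigh
  norm_cast at hlow hhigh
  have hdiv : k ^ m / l ^ t = C :=
    Nat.div_eq_of_lt_le (by nlinarith) (by nlinarith)
  obtain ⟨w, hw⟩ : ∃ w, k ^ m * d = l ^ t * (C * d) + w :=
    Nat.exists_eq_add_of_le (by nlinarith)
  have hmod : k ^ m * d % l ^ t = w := by
    rw [hw, Nat.mul_add_mod, Nat.mod_eq_of_lt (by linarith)]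
  exact ⟨m, t, hm, hdiv, by rw [hmod]; nlinarith, by rw [hmod]; nlinarith⟩

end MultIndep

end MultiplicativeIndependence

section ShiftInvariance

theorem exists_mem_Ico_forall_mul_add_notMem {Q a b : ℕ} (B : Finset ℕ) (hB : B.card < b - a)
    (hb : b ≤ Q) : ∃ v ∈ Set.Ico a b, ∀ u, Q * u + v ∉ B := by
  have hcard : (B.image (· % Q)).card < (Finset.Ico a b).card := by
    rw [Nat.card_Ico]
    exact Finset.card_image_le.trans_lt hB
  obtain ⟨v, hv, hvB⟩ := Finset.exists_mem_notMem_of_card_lt_card hcard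
  rw [Finset.mem_Ico] at hv
  refine ⟨v, hv, fun u hu => hvB (Finset.mem_image.2 ⟨_, hu, ?_⟩)⟩
  rw [Nat.mul_add_mod, Nat.mod_eq_of_lt (hv.2.trans_le hb)]

namespace IsDigitAdditive

variable {G : Type*} [AddCommGroup G] {f : ℕ → G}

theorem fwdDiff_eq_of_shift {Q u v h : ℕ} (hf : IsDigitAdditive Q f) (hv : v < Q)
    (h₀ : f (Q * u + v) = f (Q * u + v + h))
    (h₁ : f (Q * (u + 1) + v) = f (Q * (u + 1) + v + h)) :
    Δ_[1] f u = Δ_[1] f (u + (v + h) / Q) := by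
  have hcarry (x : ℕ) :
      f (Q * x + v + h) = f (x + (v + h) / Q) + f ((v + h) % Q) := by
    rw [← hf (Nat.mod_lt _ (by omega))]
    congr 1
    linarith [Nat.div_add_mod (v + h) Q]
  rw [hf hv, hcarry] at h₀ h₁
  rw [fwdDiff, fwdDiff, ← add_sub_add_right_eq_sub _ _ (f v), h₀, h₁, add_sub_add_right_eq_sub,
    add_right_comm]

theorem exists_shift_ne {Q h u : ℕ} (hf : IsDigitAdditive Q f) (B : Finset ℕ)
    (hlow : B.card < h % Q) (hhigh : h % Q + B.card < Q)
    (hu : Δ_[1] f (u + h / Q) ≠ Δ_[1] f (u + h / Q + 1)) :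
    ∃ x ∉ B, Q * u ≤ x ∧ x < Q * (u + 2) ∧ f x ≠ f (x + h) := by
  by_contra! hinv
  have hshift {v : ℕ} (hv : v < Q) (hvB : ∀ u, Q * u + v ∉ B) :
      Δ_[1] f u = Δ_[1] f (u + (v + h) / Q) :=
    hf.fwdDiff_eq_of_shift hv (hinv _ (hvB u) (by linarith) (by linarith))
      (hinv _ (hvB (u + 1)) (by linarith) (by linarith))
  obtain ⟨v₁, ⟨-, hv₁⟩, hv₁B⟩ :=
    exists_mem_Ico_forall_mul_add_notMem (Q := Q) (a := 0) (b := B.card + 1) B (by omega) (by omega)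
  obtain ⟨v₂, ⟨hv₂, hv₂Q⟩, hv₂B⟩ :=
    exists_mem_Ico_forall_mul_add_notMem (a := Q - (B.card + 1)) B (by omega) (le_refl Q)
  have hQh : Q * (h / Q) + h % Q = h := Nat.div_add_mod h Q
  have hcarry₁ : (v₁ + h) / Q = h / Q :=
    Nat.div_eq_of_lt_le (by linarith) (by linarith)
  have hcarry₂ : (v₂ + h) / Q = h / Q + 1 := by
    have : Q ≤ v₂ + h % Q := by omega
    exact Nat.div_eq_of_lt_le (by linarith) (by linarith)
  have h₁ := hshift (by omega) hv₁B
  have h₂ := hshift hv₂Q hv₂B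
  rw [hcarry₁] at h₁
  rw [hcarry₂, ← add_assoc] at h₂
  exact hu (h₁.symm.trans h₂)

theorem exists_shift_ne_of_bounded_gaps {Q R h P : ℕ} (hf : IsDigitAdditive Q f)
    (hR : ∀ N, ∃ y, N ≤ y ∧ y < N + R ∧ Δ_[1] f y ≠ Δ_[1] f (y + 1)) (B : Finset ℕ)
    (hlow : B.card < h % Q) (hhigh : h % Q + B.card < Q) :
    ∃ x ∉ B, P ≤ x ∧ x < P + (R + 2) * Q ∧ f x ≠ f (x + h) := by
  obtain ⟨y, hPy, hyP, hΔ⟩ := hR (P / Q + 1 + h / Q)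
  obtain ⟨u, rfl⟩ := Nat.exists_eq_add_of_le' ((Nat.le_add_left _ _).trans hPy)
  have hPu : P < Q * u := by
    rw [mul_comm, ← Nat.div_lt_iff_lt_mul (by omega)]
    linarith
  have huP : Q * (u + 2) ≤ P + (R + 2) * Q := by
    calc Q * (u + 2) ≤ Q * (P / Q + (R + 2)) := Nat.mul_le_mul_left _ (by linarith)
      _ ≤ P + (R + 2) * Q := by linarith [Nat.mul_div_le P Q]
  obtain ⟨x, hxB, hux, hxu, hne⟩ := hf.exists_shift_ne B hlow hhigh hΔ
  exact ⟨x, hxB, hPu.le.trans hux, hxu.trans_le huP, hne⟩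

theorem exists_forall_exists_fwdDiff_ne {l c : ℕ} (hf : IsDigitAdditive l f) (hl : 1 < l)
    (hc : Δ_[1] f c ≠ Δ_[1] f (c + 1)) :
    ∃ R, ∀ N, ∃ y, N ≤ y ∧ y < N + R ∧ Δ_[1] f y ≠ Δ_[1] f (y + 1) := by
  set Q := l ^ (c + 2)
  have hcQ : c + 2 < Q := Nat.lt_pow_self hl
  have hblock (z : ℕ) {r : ℕ} (hr : r < Q) : f (Q * z + r) = f z + f r := hf.pow (by omega) _ hr
  refine ⟨2 * Q, fun N => ⟨Q * (N / Q + 1) + c, ?_, ?_, ?_⟩⟩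
  · linarith [Nat.div_add_mod N Q, Nat.mod_lt N (by omega : Q > 0)]
  · linarith [Nat.mul_div_le N Q]
  · simp only [fwdDiff, add_assoc, hblock _ (by omega : c < Q), hblock _ (by omega : c + 1 < Q),
      hblock _ hcQ, add_sub_add_left_eq_sub, Nat.reduceAdd] at hc ⊢
    exact hc

theorem exists_notMem_ne_of_isAutomatic {k l c : ℕ} (hf : IsDigitAdditive l f) (hk : 1 < k)
    (hl : 1 < l) (hkl : MultIndep k l) (hc : Δ_[1] f c ≠ Δ_[1] f (c + 1)) {a : ℕ → G}
    (ha : IsAutomatic k a) {A : Set ℕ} (hA : upperDensity A = 0) : ∃ n ∉ A, a n ≠ f n := by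
  by_contra! hfa
  obtain ⟨X, _, φ, τ, hφ, rfl⟩ := ha.exists_respectsDigits hk
  obtain ⟨n, d, hd, hshift⟩ := hφ.exists_eq_shift
  obtain ⟨R, hR⟩ := hf.exists_forall_exists_fwdDiff_ne hl hc
  obtain ⟨N, hN⟩ := eventually_atTop.1
    (eventually_exists_finset_shift_notMem hA (4 * (R + 3) * (n + 1 + d)))
  obtain ⟨m, t, hm, hdiv, hlow, hhigh⟩ := hkl.exists_pow_div_eq_and_mod_mem hk hl hd (R + 2) N
  have hfQ : IsDigitAdditive (l ^ t) f := hf.pow (by omega) t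
  have hQ : 0 < l ^ t := by positivity
  set Q := l ^ t
  set h := k ^ m * d with hh
  have hQk : (R + 2) * Q ≤ k ^ m := hdiv ▸ Nat.div_mul_le_self _ _
  have hkQ : k ^ m < (R + 3) * Q := by
    rw [← Nat.div_lt_iff_lt_mul hQ, hdiv]
    omega
  obtain ⟨B, hBcard, hB⟩ := hN (k ^ m * (n + 1 + d))
    ((hm.trans (Nat.lt_pow_self hk).le).trans (Nat.le_mul_of_pos_right _ (by omega))) h
  have hBQ : 4 * B.card < Q := by
    have : 4 * (R + 3) * B.card < k ^ m := by
      refine Nat.lt_of_mul_lt_mul_right (a := n + 1 + d) ?_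
      linarith
    nlinarith
  obtain ⟨x, hxB, hnx, hxn, hne⟩ :=
    hfQ.exists_shift_ne_of_bounded_gaps hR B (h := h) (P := k ^ m * n) (by omega) (by omega)
  have hxn' : x < k ^ m * (n + 1) := by linarith
  obtain ⟨hxA, hxhA⟩ := hB x hxB (by linarith [hh])
  exact hne (by rw [← hfa x hxA, ← hfa _ hxhA, Function.comp_apply, hshift m x hnx hxn']; rfl)

end IsDigitAdditive

end ShiftInvariance

section SpecialDigits

/-- The parity of the number of special digits in base `9`; it is `0` exactly where the sequence `b`
of Deshouillers and Ruzsa takes the value `4`. -/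
def specialDigitParity (n : ℕ) : ZMod 2 := specialDigitCount n

theorem isDigitAdditive_specialDigitParity : IsDigitAdditive 9 specialDigitParity :=
  (isDigitAdditive_length_filter_digits (by norm_num) (by decide)).comp_addMonoidHom
    (Nat.castAddMonoidHom (ZMod 2))

theorem fwdDiff_specialDigitParity_zero_ne_one :
    Δ_[1] specialDigitParity 0 ≠ Δ_[1] specialDigitParity 1 := by
  simp [fwdDiff, specialDigitParity, specialDigitCount]

theorem specialDigitParity_eq_ite (n : ℕ) :
    specialDigitParity n = if Even (specialDigitCount n) then 0 else 1 := by
  split_ifs with h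
  · exact (ZMod.natCast_eq_zero_iff_even).2 h
  · exact (ZMod.natCast_eq_one_iff_odd).2 (Nat.not_even_iff_odd.1 h)

end SpecialDigits

/-- For `y ∈ {4, 8}`, the sequence `n ↦ [t₁₂(n!) = y]` is not `k`-automatic for any
`k ≥ 2`. Here one assumes as input the facts of Deshouillers–Ruzsa and Deshouillers:
(i) there is a `3`-automatic sequence `b` coinciding almost everywhere with
`t₁₂(n!)`, where `b(n) = 4` if the digits `2,3,4,6,7` occur in total an even number
of times among the base-`9` digits of `n`, and `b(n) = 8` otherwise;
(ii) `n ↦ [t₁₂(n!) = y]` is not `3`-automatic for `y ∈ {4, 8}`. -/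
theorem leastNonzeroDigit_factorial_not_automatic
    (hDR : ∃ b : ℕ → ℕ, IsAutomatic 3 b ∧
      (∀ n : ℕ, b n = if Even (specialDigitCount n) then 4 else 8) ∧
      upperDensity {n : ℕ | leastNonzeroDigit 12 (Nat.factorial n) ≠ b n} = 0)
    (hD3 : ∀ y ∈ ({4, 8} : Set ℕ), ¬ IsAutomatic 3
      (fun n : ℕ => if leastNonzeroDigit 12 (Nat.factorial n) = y then 1 else 0)) :
    ∀ y ∈ ({4, 8} : Set ℕ), ∀ k : ℕ, 2 ≤ k → ¬ IsAutomatic k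
      (fun n : ℕ => if leastNonzeroDigit 12 (Nat.factorial n) = y then 1 else 0) := by
  obtain ⟨b, -, hb, hA⟩ := hDR
  intro y hy k hk hauto
  by_cases hk3 : ∃ s, k = 3 ^ s
  · obtain ⟨s, rfl⟩ := hk3
    exact hD3 y hy (hauto.of_pow (by norm_num) (by rintro rfl; norm_num at hk))
  · push Not at hk3
    let g : ℕ → ZMod 2 := fun z => if (z = 1 ↔ y = 4) then 0 else 1
    obtain ⟨n, hn, hne⟩ := isDigitAdditive_specialDigitParity.exists_notMem_ne_of_isAutomatic hk
      (by norm_num) (multIndep_prime_pow (s := 2) Nat.prime_three two_ne_zero hk3)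
      fwdDiff_specialDigitParity_zero_ne_one (hauto.comp g) hA
    rw [Set.mem_ofPred_eq, not_not] at hn
    apply hne
    rw [Function.comp_apply, hn, hb, specialDigitParity_eq_ite]
    rcases hy with rfl | rfl <;> by_cases h : Even (specialDigitCount n) <;> simp [g, h]
end
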